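/- arXiv:2201.09524 — 3 statements merged into one kernel-verified Lean document; each statement's English description precedes it below -/
import Mathlib

section
/- For every integer n ≥ 0 and every t ∈ ℝ, the Taylor remainder of the cosine satisfies the sign condition (−1)^{n+1} ( cos t − Σ_{i=0}^{n} (−1)^i t^{2i}/(2i)! ) ≥ 0. -/
open scoped BigOperators

lemma aux_mono (f g : ℝ → ℝ) (h : ∀ t, HasDerivAt f (g t) t) (h0 : f 0 = 0)
    (hg : ∀ t, 0 ≤ t → 0 ≤ g t) : ∀ t, 0 ≤ t → 0 ≤ f t := by
  intro t ht
  have hm : MonotoneOn f (Set.Ici 0) := by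
    apply monotoneOn_of_deriv_nonneg (convex_Ici 0)
    · exact fun x _ => (h x).continuousAt.continuousWithinAt
    · exact fun x _ => (h x).differentiableAt.differentiableWithinAt
    · intro x hx
      rw [(h x).deriv]
      rw [interior_Ici] at hx
      exact hg x (le_of_lt hx)
  have := hm (Set.mem_Ici.2 le_rfl) (Set.mem_Ici.2 ht) ht
  rwa [h0] at this

lemma aux_pow (k : ℕ) (c t : ℝ) :
    HasDerivAt (fun t : ℝ => c * t ^ (k + 1) / (k + 1).factorial)
      (c * t ^ k / k.factorial) t := by
  have h := ((hasDerivAt_pow (k + 1) t).const_mul c).div_const ((k + 1).factorial : ℝ)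
  refine h.congr_deriv ?_
  have : (k.factorial : ℝ) ≠ 0 := by positivity
  rw [Nat.factorial_succ]
  push_cast
  have : (k : ℝ) + 1 ≠ 0 := by positivity
  field_simp

lemma aux_S (n : ℕ) (t : ℝ) :
    HasDerivAt (fun t : ℝ => ∑ i ∈ Finset.range (n + 1),
        (-1 : ℝ) ^ i * t ^ (2 * i + 1) / (2 * i + 1).factorial)
      (∑ i ∈ Finset.range (n + 1), (-1 : ℝ) ^ i * t ^ (2 * i) / (2 * i).factorial) t :=
  HasDerivAt.fun_sum fun i _ => aux_pow (2 * i) _ t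

lemma aux_C (n : ℕ) (t : ℝ) :
    HasDerivAt (fun t : ℝ => ∑ i ∈ Finset.range (n + 1 + 1),
        (-1 : ℝ) ^ i * t ^ (2 * i) / (2 * i).factorial)
      (-∑ i ∈ Finset.range (n + 1),
        (-1 : ℝ) ^ i * t ^ (2 * i + 1) / (2 * i + 1).factorial) t := by
  simp only [Finset.sum_range_succ' _ (n + 1)]
  rw [← Finset.sum_neg_distrib]
  have h : HasDerivAt (fun t : ℝ => ∑ i ∈ Finset.range (n + 1),
        (-1 : ℝ) ^ (i + 1) * t ^ (2 * (i + 1)) / (2 * (i + 1)).factorial)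
      (∑ i ∈ Finset.range (n + 1),
        (-1 : ℝ) ^ (i + 1) * t ^ (2 * i + 1) / (2 * i + 1).factorial) t :=
    HasDerivAt.fun_sum fun i _ => aux_pow (2 * i + 1) _ t
  have h2 := (h.add_const ((-1 : ℝ) ^ 0 * 1 / (2 * 0).factorial))
  simp only [mul_zero, pow_zero] at h2 ⊢
  refine h2.congr_deriv ?_
  refine Finset.sum_congr rfl fun i _ => ?_
  ring

lemma aux_main (n : ℕ) : ∀ t : ℝ, 0 ≤ t → 0 ≤ (-1 : ℝ) ^ (n + 1) *
      (Real.cos t - ∑ i ∈ Finset.range (n + 1),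
        (-1 : ℝ) ^ i * t ^ (2 * i) / (2 * i).factorial) := by
  induction n with
  | zero =>
    intro t _
    have := Real.cos_le_one t
    simp
    linarith
  | succ n ih =>
    have hS := aux_mono (fun t => (-1 : ℝ) ^ (n + 1) *
      (Real.sin t - ∑ i ∈ Finset.range (n + 1),
        (-1 : ℝ) ^ i * t ^ (2 * i + 1) / (2 * i + 1).factorial)) _
      (fun t => ((Real.hasDerivAt_sin t).sub (aux_S n t)).const_mul _) (by simp) ih
    refine aux_mono _ _
      (fun t => ((Real.hasDerivAt_cos t).sub (aux_C n t)).const_mul _) ?_ ?_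
    · simp [Finset.sum_range_succ' _ (n + 1)]
    · intro t ht
      have := hS t ht
      rw [pow_succ]
      linarith

/-- for every `n ≥ 0` and every real `t`, the Taylor remainder of the
cosine satisfies `(−1)^{n+1} (cos t − Σ_{i=0}^{n} (−1)^i t^{2i}/(2i)!) ≥ 0`. -/
theorem cos_taylor_remainder_sign (n : ℕ) (t : ℝ) :
    0 ≤ (-1 : ℝ) ^ (n + 1) *
      (Real.cos t - ∑ i ∈ Finset.range (n + 1),
        (-1 : ℝ) ^ i * t ^ (2 * i) / (2 * i).factorial) := by
  have h := aux_main n |t| (abs_nonneg t)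
  simpa only [Real.cos_abs, pow_mul, sq_abs] using h
end

section
/- The generalized Lévy operator L is symmetric on smooth compactly supported functions: for all real-valued f, g ∈ C_c^∞(ℝ^d), ∫_{ℝ^d} g(x) Lf(x) dx = ∫_{ℝ^d} f(x) Lg(x) dx. -/
open scoped BigOperators
open MeasureTheory

noncomputable section

/-- The compensated integrand `f(x+y) − f(x) − Σ_{i=1}^{2l} (1/i!) Dⁱf(x)[y,…,y]`. -/
def levyIntegrand {d : ℕ} (l : ℕ) (f : EuclideanSpace ℝ (Fin d) → ℝ)
    (x y : EuclideanSpace ℝ (Fin d)) : ℝ :=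
  f (x + y) - f x - ∑ i ∈ Finset.Icc 1 (2 * l),
    (1 / (i.factorial : ℝ)) * iteratedFDeriv ℝ i f x (fun _ => y)

/-- The density `h(y)|y|^{−(2l+1+α)}` of the Lévy measure. -/
def levyWeight {d : ℕ} (l : ℕ) (α : ℝ) (h : EuclideanSpace ℝ (Fin d) → ℝ)
    (y : EuclideanSpace ℝ (Fin d)) : ℝ :=
  h y * ‖y‖ ^ (-(2 * (l : ℝ) + 1 + α))

/-- The generalized Lévy operator
`Lf(x) = (−1)^{l+1} ∫ (f(x+y) − f(x) − Σ_{i=1}^{2l} (1/i!) Dⁱf(x)[y,…,y]) h(y)|y|^{−(2l+1+α)} dy`. -/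
def levyOp {d : ℕ} (l : ℕ) (α : ℝ) (h : EuclideanSpace ℝ (Fin d) → ℝ)
    (f : EuclideanSpace ℝ (Fin d) → ℝ) (x : EuclideanSpace ℝ (Fin d)) : ℝ :=
  (-1 : ℝ) ^ (l + 1) * ∫ y, levyIntegrand l f x y * levyWeight l α h y

lemma nat_le_smooth (n : ℕ) : (n : WithTop ℕ∞) ≤ ((⊤ : ℕ∞) : WithTop ℕ∞) := by
  exact_mod_cast (le_top : (n : ℕ∞) ≤ ⊤)

/-- The `i`-th directional derivative. -/
def dirD {d : ℕ} (i : ℕ) (f : EuclideanSpace ℝ (Fin d) → ℝ)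
    (y x : EuclideanSpace ℝ (Fin d)) : ℝ :=
  iteratedFDeriv ℝ i f x (fun _ => y)

lemma dirD_contDiff {d : ℕ} (i : ℕ) (f : EuclideanSpace ℝ (Fin d) → ℝ)
    (hf : ContDiff ℝ (⊤ : ℕ∞) f) (y : EuclideanSpace ℝ (Fin d)) :
    ContDiff ℝ (⊤ : ℕ∞) (dirD i f y) := by
  have h1 : ContDiff ℝ (⊤ : ℕ∞) (iteratedFDeriv ℝ i f) :=
    hf.iteratedFDeriv_right (by exact_mod_cast le_top)
  exact (ContinuousMultilinearMap.apply ℝ (fun _ : Fin i => EuclideanSpace ℝ (Fin d)) ℝ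
    (fun _ => y)).contDiff.comp h1

lemma dirD_succ {d : ℕ} (i : ℕ) (f : EuclideanSpace ℝ (Fin d) → ℝ)
    (hf : ContDiff ℝ (⊤ : ℕ∞) f) (y x : EuclideanSpace ℝ (Fin d)) :
    dirD (i + 1) f y x = fderiv ℝ (dirD i f y) x y := by
  have h1 : ContDiff ℝ (⊤ : ℕ∞) (iteratedFDeriv ℝ i f) :=
    hf.iteratedFDeriv_right (by exact_mod_cast le_top)
  exact DifferentiableAt.iteratedFDeriv_succ_apply_left'
    ((h1.differentiable (by simp)).differentiableAt)

lemma dirD_supp {d : ℕ} (i : ℕ) (f : EuclideanSpace ℝ (Fin d) → ℝ)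
    (hf : HasCompactSupport f) (y : EuclideanSpace ℝ (Fin d)) :
    HasCompactSupport (dirD i f y) :=
  (hf.iteratedFDeriv (𝕜 := ℝ) i).comp_left
    (g := fun L : ContinuousMultilinearMap ℝ (fun _ : Fin i => EuclideanSpace ℝ (Fin d)) ℝ =>
      L (fun _ => y)) (by simp)

lemma dirD_zero {d : ℕ} (f : EuclideanSpace ℝ (Fin d) → ℝ)
    (y x : EuclideanSpace ℝ (Fin d)) : dirD 0 f y x = f x := by
  simp [dirD]

lemma dirD_neg {d : ℕ} (i : ℕ) (f : EuclideanSpace ℝ (Fin d) → ℝ)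
    (y x : EuclideanSpace ℝ (Fin d)) : dirD i f (-y) x = (-1) ^ i * dirD i f y x := by
  have := (iteratedFDeriv ℝ i f x).map_smul_univ (fun _ => (-1 : ℝ)) (fun _ => y)
  simpa [dirD] using this

lemma dirD_mul_integrable {d : ℕ} (i k : ℕ) (f g : EuclideanSpace ℝ (Fin d) → ℝ)
    (hf : ContDiff ℝ (⊤ : ℕ∞) f) (hg : ContDiff ℝ (⊤ : ℕ∞) g)
    (hgs : HasCompactSupport g) (y : EuclideanSpace ℝ (Fin d)) :
    Integrable (fun x => dirD k g y x * dirD i f y x) :=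
  ((dirD_contDiff k g hg y).continuous.mul
    (dirD_contDiff i f hf y).continuous).integrable_of_hasCompactSupport
    ((dirD_supp k g hgs y).mul_right)

lemma dirD_ibp {d : ℕ} (f g : EuclideanSpace ℝ (Fin d) → ℝ)
    (hf : ContDiff ℝ (⊤ : ℕ∞) f) (hg : ContDiff ℝ (⊤ : ℕ∞) g)
    (hgs : HasCompactSupport g) (y : EuclideanSpace ℝ (Fin d)) (i : ℕ) :
    ∀ k, ∫ x, dirD k g y x * dirD i f y x
      = (-1) ^ i * ∫ x, dirD (k + i) g y x * f x := by
  induction i with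
  | zero => intro k; simp [dirD_zero]
  | succ i ih =>
    intro k
    have h1 := integral_mul_fderiv_eq_neg_fderiv_mul_of_integrable
      (μ := (volume : Measure (EuclideanSpace ℝ (Fin d)))) (f := dirD k g y) (g := dirD i f y)
      (v := y)
      (by simpa only [← dirD_succ _ _ hg] using dirD_mul_integrable i (k + 1) f g hf hg hgs y)
      (by simpa only [← dirD_succ _ _ hf] using dirD_mul_integrable (i + 1) k f g hf hg hgs y)
      (dirD_mul_integrable i k f g hf hg hgs y)
      (fun x _ => ((dirD_contDiff k g hg y).differentiable (by simp)).differentiableAt)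
      (fun x _ => ((dirD_contDiff i f hf y).differentiable (by simp)).differentiableAt)
    simp only [← dirD_succ _ _ hf, ← dirD_succ _ _ hg] at h1
    rw [h1, ih (k + 1), show k + 1 + i = k + (i + 1) by ring]
    ring

lemma iteratedDeriv_line {d : ℕ} (f : EuclideanSpace ℝ (Fin d) → ℝ)
    (hf : ContDiff ℝ (⊤ : ℕ∞) f) (x y : EuclideanSpace ℝ (Fin d)) (i : ℕ) :
    iteratedDeriv i (fun t : ℝ => f (x + t • y)) = fun t => dirD i f y (x + t • y) := by
  induction i with
  | zero => ext t; simp [dirD_zero]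
  | succ i ih =>
    ext t
    rw [iteratedDeriv_succ, ih, dirD_succ _ _ hf]
    have h1 : HasDerivAt (fun t : ℝ => x + t • y) y t := by
      simpa using ((hasDerivAt_id t).smul_const y).const_add x
    have h2 : HasFDerivAt (dirD i f y) (fderiv ℝ (dirD i f y) (x + t • y)) (x + t • y) :=
      (((dirD_contDiff i f hf y).differentiable (by simp)).differentiableAt).hasFDerivAt
    exact (h2.comp_hasDerivAt t h1).deriv

lemma levyIntegrand_bound {d : ℕ} (l : ℕ) (f : EuclideanSpace ℝ (Fin d) → ℝ)
    (hf : ContDiff ℝ (⊤ : ℕ∞) f) (hfs : HasCompactSupport f) :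
    ∃ C, 0 ≤ C ∧ ∀ x y, |levyIntegrand l f x y| ≤ C * ‖y‖ ^ (2 * l + 1) := by
  have hc : Continuous (iteratedFDeriv ℝ (2 * l + 1) f) :=
    hf.continuous_iteratedFDeriv (nat_le_smooth _)
  obtain ⟨C, hC⟩ := (hfs.iteratedFDeriv (𝕜 := ℝ) (2 * l + 1)).exists_bound_of_continuous hc
  have hC0 : 0 ≤ C := (norm_nonneg _).trans (hC 0)
  refine ⟨C, hC0, fun x y => ?_⟩
  have hφ : ContDiff ℝ (⊤ : ℕ∞) (fun t : ℝ => f (x + t • y)) :=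
    hf.comp (by fun_prop)
  obtain ⟨t, -, ht⟩ := taylor_mean_remainder_lagrange_iteratedDeriv
    (f := fun t : ℝ => f (x + t • y)) (x := 1) (x₀ := 0) (n := 2 * l) (by norm_num)
    ((hφ.of_le (nat_le_smooth (2 * l + 1))).contDiffOn)
  have key : levyIntegrand l f x y = dirD (2 * l + 1) f y (x + t • y) / (2 * l + 1).factorial := by
    rw [iteratedDeriv_line f hf, taylor_within_apply] at ht
    simp only [sub_zero, one_pow, mul_one] at ht
    rw [← ht, Finset.range_eq_Ico, Finset.sum_eq_sum_Ico_succ_bot (by omega)]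
    unfold levyIntegrand
    have e : ∀ k, iteratedDerivWithin k (fun t : ℝ => f (x + t • y)) (Set.uIcc 0 1) 0
        = dirD k f y x := by
      intro k
      rw [iteratedDerivWithin_eq_iteratedDeriv (uniqueDiffOn_uIcc (by norm_num))
        (hφ.contDiffAt.of_le (nat_le_smooth _)) (by simp), iteratedDeriv_line f hf]
      simp
    simp only [e, dirD_zero]
    have : Finset.Icc 1 (2 * l) = Finset.Ico (0 + 1) (2 * l + 1) := by
      ext; simp
    rw [this]
    simp [dirD, sub_sub]
  rw [key, abs_div]
  have h1 : |dirD (2 * l + 1) f y (x + t • y)| ≤ C * ‖y‖ ^ (2 * l + 1) := by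
    have := (iteratedFDeriv ℝ (2 * l + 1) f (x + t • y)).le_opNorm (fun _ => y)
    simp only [Finset.prod_const, Finset.card_univ, Fintype.card_fin] at this
    exact this.trans (by gcongr; exact hC _)
  refine (div_le_self (abs_nonneg _) ?_).trans h1
  rw [abs_of_nonneg (by positivity)]
  exact_mod_cast Nat.one_le_iff_ne_zero.mpr (Nat.factorial_ne_zero _)

lemma levyIntegrand_cont {d : ℕ} (l : ℕ) (f : EuclideanSpace ℝ (Fin d) → ℝ)
    (hf : ContDiff ℝ (⊤ : ℕ∞) f) :
    Continuous (fun p : EuclideanSpace ℝ (Fin d) × EuclideanSpace ℝ (Fin d) =>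
      levyIntegrand l f p.1 p.2) := by
  unfold levyIntegrand
  have hfc := hf.continuous
  refine ((hfc.comp (by fun_prop)).sub (hfc.comp continuous_fst)).sub
    (continuous_finsetSum _ fun i _ => continuous_const.mul ?_)
  have hc : Continuous (iteratedFDeriv ℝ i f) :=
    hf.continuous_iteratedFDeriv (nat_le_smooth _)
  have h2 : Continuous (fun p : EuclideanSpace ℝ (Fin d) × EuclideanSpace ℝ (Fin d) =>
    (iteratedFDeriv ℝ i f p.1, fun _ : Fin i => p.2)) := by fun_prop
  exact continuous_eval.comp h2

lemma levyWeight_bound {d : ℕ} (l : ℕ) (α : ℝ) (hα : α ∈ Set.Ioo (-1 : ℝ) 0)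
    (h : EuclideanSpace ℝ (Fin d) → ℝ) (hpos : ∀ y, 0 ≤ h y)
    (M : ℝ) (hbd : ∀ y, h y ≤ M) (R : ℝ)
    (hvan : ∀ y : EuclideanSpace ℝ (Fin d), R < ‖y‖ → h y = 0)
    (y : EuclideanSpace ℝ (Fin d)) :
    ‖y‖ ^ (2 * l + 1) * |levyWeight l α h y|
      ≤ (Metric.closedBall (0 : EuclideanSpace ℝ (Fin d)) R).indicator
        (fun _ => M * R ^ (-α)) y := by
  obtain ⟨h1, h2⟩ := hα
  by_cases hy : R < ‖y‖
  · simp [levyWeight, hvan y hy, hy]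
  push Not at hy
  have hM : 0 ≤ M := (hpos 0).trans (hbd 0)
  have hR : 0 ≤ R := (norm_nonneg y).trans hy
  rw [Set.indicator_of_mem (by simpa using hy)]
  unfold levyWeight
  rw [abs_mul, abs_of_nonneg (hpos y), abs_of_nonneg (by positivity)]
  rcases eq_or_lt_of_le (norm_nonneg y) with h0 | h0
  · rw [← h0]; simp; positivity
  · have : ‖y‖ ^ (2 * l + 1) * (h y * ‖y‖ ^ (-(2 * (l : ℝ) + 1 + α))) = h y * ‖y‖ ^ (-α) := by
      rw [← Real.rpow_natCast, mul_left_comm, ← Real.rpow_add h0]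
      congr 2
      push_cast; ring
    rw [this]
    exact mul_le_mul (hbd y) (Real.rpow_le_rpow h0.le hy (by linarith)) (by positivity) hM

lemma levy_prod_integrable {d : ℕ} (l : ℕ) (α : ℝ) (hα : α ∈ Set.Ioo (-1 : ℝ) 0)
    (h : EuclideanSpace ℝ (Fin d) → ℝ) (hmeas : Measurable h) (hpos : ∀ y, 0 ≤ h y)
    (M : ℝ) (hbd : ∀ y, h y ≤ M) (R : ℝ)
    (hvan : ∀ y : EuclideanSpace ℝ (Fin d), R < ‖y‖ → h y = 0)
    (f g : EuclideanSpace ℝ (Fin d) → ℝ)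
    (hf : ContDiff ℝ (⊤ : ℕ∞) f) (hfsupp : HasCompactSupport f)
    (hg : ContDiff ℝ (⊤ : ℕ∞) g) (hgsupp : HasCompactSupport g) :
    Integrable (fun p : EuclideanSpace ℝ (Fin d) × EuclideanSpace ℝ (Fin d) =>
      g p.1 * (levyIntegrand l f p.1 p.2 * levyWeight l α h p.2)) (volume.prod volume) := by
  obtain ⟨C, hC0, hC⟩ := levyIntegrand_bound l f hf hfsupp
  have hw : Measurable (levyWeight l α h) := by unfold levyWeight; fun_prop
  have hgi : Integrable g := hg.continuous.integrable_of_hasCompactSupport hgsupp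
  have hI : Integrable ((Metric.closedBall (0 : EuclideanSpace ℝ (Fin d)) R).indicator
        (fun _ => M * R ^ (-α))) := by
    rw [integrable_indicator_iff measurableSet_closedBall]
    exact integrableOn_const measure_closedBall_lt_top.ne
  refine Integrable.mono' ((hgi.norm).mul_prod (hI.const_mul C)) ?_ (ae_of_all _ fun p => ?_)
  · have := (levyIntegrand_cont l f hf).measurable
    have := hg.continuous.measurable
    exact Measurable.aestronglyMeasurable (by fun_prop)
  · have h1 := levyWeight_bound l α hα h hpos M hbd R hvan p.2
    have h2 := hC p.1 p.2
    rw [norm_mul, norm_mul, Real.norm_eq_abs (levyIntegrand _ _ _ _),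
      Real.norm_eq_abs (levyWeight _ _ _ _)]
    refine mul_le_mul_of_nonneg_left ?_ (norm_nonneg _)
    calc _ ≤ C * ‖p.2‖ ^ (2 * l + 1) * |levyWeight l α h p.2| := by gcongr
      _ = C * (‖p.2‖ ^ (2 * l + 1) * |levyWeight l α h p.2|) := by ring
      _ ≤ _ := by gcongr

lemma levy_pairing {d : ℕ} (l : ℕ) (f g : EuclideanSpace ℝ (Fin d) → ℝ)
    (hf : ContDiff ℝ (⊤ : ℕ∞) f) (hfs : HasCompactSupport f)
    (hg : ContDiff ℝ (⊤ : ℕ∞) g) (hgs : HasCompactSupport g) (y : EuclideanSpace ℝ (Fin d)) :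
    ∫ x, g x * levyIntegrand l f x y = ∫ x, f x * levyIntegrand l g x (-y) := by
  have expand : ∀ (f g : EuclideanSpace ℝ (Fin d) → ℝ), ContDiff ℝ (⊤ : ℕ∞) f →
      ContDiff ℝ (⊤ : ℕ∞) g → HasCompactSupport g → ∀ y,
      ∫ x, g x * levyIntegrand l f x y = (∫ x, g x * f (x + y)) - (∫ x, g x * f x)
        - ∑ i ∈ Finset.Icc 1 (2 * l), (1 / (i.factorial : ℝ)) * ∫ x, g x * dirD i f y x := by
    intro f g hf hg hgs y
    have i1 : Integrable (fun x => g x * f (x + y)) :=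
      (hg.continuous.mul (hf.continuous.comp (by fun_prop))).integrable_of_hasCompactSupport
        hgs.mul_right
    have i2 : Integrable (fun x => g x * f x) :=
      (hg.continuous.mul hf.continuous).integrable_of_hasCompactSupport hgs.mul_right
    have i3 : ∀ i, Integrable (fun x => (1 / (i.factorial : ℝ)) * (g x * dirD i f y x)) := by
      intro i
      have := dirD_mul_integrable i 0 f g hf hg hgs y
      simp only [dirD_zero] at this
      exact this.const_mul _
    have i12 : Integrable (fun x => g x * f (x + y) - g x * f x) := i1.sub i2
    simp only [← integral_const_mul]
    rw [← integral_finsetSum _ (fun i _ => i3 i), ← integral_sub i1 i2,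
      ← integral_sub i12 (integrable_finsetSum _ fun i _ => i3 i)]
    congr 1; ext x
    unfold levyIntegrand
    rw [mul_sub, mul_sub, Finset.mul_sum]
    congr 1
    refine Finset.sum_congr rfl fun i _ => ?_
    simp only [dirD]; ring
  rw [expand f g hf hg hgs, expand g f hg hf hfs]
  congr 1
  · congr 1
    · rw [← integral_add_right_eq_self (fun x => f x * g (x + -y)) y]
      congr 1; ext x; simp [mul_comm]
    · congr 1; ext x; ring
  · refine Finset.sum_congr rfl fun i _ => ?_
    have := dirD_ibp f g hf hg hgs y i 0
    simp only [dirD_zero, zero_add] at this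
    rw [this, ← integral_const_mul]
    congr 2; ext x
    rw [dirD_neg]; ring


/-- the generalized Lévy operator is symmetric on `C_c^∞(ℝ^d)`:
`∫ g(x) Lf(x) dx = ∫ f(x) Lg(x) dx`. -/
theorem levyOp_symmetric
    (d l : ℕ) (α : ℝ) (hα : α ∈ Set.Ioo (-1 : ℝ) 0)
    (h : EuclideanSpace ℝ (Fin d) → ℝ)
    (hmeas : Measurable h) (hpos : ∀ y, 0 ≤ h y)
    (M : ℝ) (hbd : ∀ y, h y ≤ M)
    (hsymm : ∀ y, h (-y) = h y)
    (R : ℝ) (hR : 0 < R) (hvan : ∀ y : EuclideanSpace ℝ (Fin d), R < ‖y‖ → h y = 0)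
    (f g : EuclideanSpace ℝ (Fin d) → ℝ)
    (hf : ContDiff ℝ (⊤ : ℕ∞) f) (hfsupp : HasCompactSupport f)
    (hg : ContDiff ℝ (⊤ : ℕ∞) g) (hgsupp : HasCompactSupport g) :
    ∫ x, g x * levyOp l α h f x = ∫ x, f x * levyOp l α h g x := by
  have key : ∀ f g : EuclideanSpace ℝ (Fin d) → ℝ, ContDiff ℝ (⊤ : ℕ∞) f → HasCompactSupport f →
      ContDiff ℝ (⊤ : ℕ∞) g → HasCompactSupport g →
      ∫ x, g x * levyOp l α h f x = (-1 : ℝ) ^ (l + 1) *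
        ∫ y, (∫ x, g x * levyIntegrand l f x y) * levyWeight l α h y := by
    intro f g hf hfs hg hgs
    have hI := levy_prod_integrable l α hα h hmeas hpos M hbd R hvan f g hf hfs hg hgs
    have hsw := integral_integral_swap
      (f := fun x y => g x * (levyIntegrand l f x y * levyWeight l α h y)) hI
    simp only [integral_const_mul] at hsw
    simp only [levyOp, mul_left_comm (g _)]
    rw [integral_const_mul, hsw]
    congr 1
    simp only [← mul_assoc, integral_mul_const]
  rw [key f g hf hfsupp hg hgsupp, key g f hg hgsupp hf hfsupp]
  congr 1
  rw [← integral_neg_eq_self]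
  congr 1; ext y
  have hw : levyWeight l α h (-y) = levyWeight l α h y := by simp [levyWeight, hsymm]
  rw [hw, levy_pairing l f g hf hfsupp hg hgsupp, neg_neg]
end
end

section
/- The symbol of the generalized Lévy operator is nonnegative: for every ξ ∈ ℝ^d, a(ξ) = (−1)^{l+1} ∫_{ℝ^d} ( cos⟨y,ξ⟩ − Σ_{j=0}^{l} (−1)^j ⟨y,ξ⟩^{2j}/(2j)! ) h(y)|y|^{−(2l+1+α)} dy is a convergent integral and a(ξ) ≥ 0. -/
open scoped BigOperators
open MeasureTheory

noncomputable section

/-- signed Taylor remainder of cosine -/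
def cosRem (l : ℕ) (x : ℝ) : ℝ :=
  (-1 : ℝ) ^ (l + 1) * (Real.cos x - ∑ j ∈ Finset.range (l + 1),
        (-1 : ℝ) ^ j * x ^ (2 * j) / (2 * j).factorial)

/-- signed Taylor remainder of sine -/
def sinRem (l : ℕ) (x : ℝ) : ℝ :=
  (-1 : ℝ) ^ (l + 1) * (Real.sin x - ∑ j ∈ Finset.range (l + 1),
        (-1 : ℝ) ^ j * x ^ (2 * j + 1) / (2 * j + 1).factorial)

lemma hasDerivAt_powfac (n : ℕ) (c x : ℝ) :
    HasDerivAt (fun x : ℝ => c * x ^ (n + 1) / (n + 1).factorial) (c * x ^ n / n.factorial) x := by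
  have h := ((hasDerivAt_pow (n + 1) x).const_mul c).div_const ((n + 1).factorial : ℝ)
  refine h.congr_deriv ?_
  have h1 : (n.factorial : ℝ) ≠ 0 := by positivity
  rw [Nat.factorial_succ]
  push_cast
  field_simp

lemma sinRem_hasDerivAt (l : ℕ) (x : ℝ) : HasDerivAt (sinRem l) (cosRem l x) x := by
  unfold sinRem cosRem
  refine HasDerivAt.const_mul _ ((Real.hasDerivAt_sin x).sub ?_)
  exact HasDerivAt.fun_sum fun j _ => hasDerivAt_powfac (2 * j) _ x

lemma cosRem_hasDerivAt (l : ℕ) (x : ℝ) : HasDerivAt (cosRem (l + 1)) (sinRem l x) x := by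
  have e : cosRem (l + 1) = fun x : ℝ => (-1 : ℝ) ^ (l + 1) * (-Real.cos x + 1 -
      ∑ j ∈ Finset.range (l + 1),
        (-1 : ℝ) ^ j * x ^ (2 * j + 1 + 1) / (2 * j + 1 + 1).factorial) := by
    funext x
    unfold cosRem
    rw [Finset.sum_range_succ']
    have : ∀ j : ℕ, (-1 : ℝ) ^ (j + 1) * x ^ (2 * (j + 1)) / (2 * (j + 1)).factorial
        = -((-1 : ℝ) ^ j * x ^ (2 * j + 1 + 1) / (2 * j + 1 + 1).factorial) := by
      intro j
      rw [show 2 * (j + 1) = 2 * j + 1 + 1 by ring, pow_succ (-1 : ℝ) j]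
      ring
    simp only [this, Finset.sum_neg_distrib]
    rw [pow_succ (-1 : ℝ) (l + 1)]
    simp
    ring
  rw [e]
  unfold sinRem
  refine HasDerivAt.const_mul _ (HasDerivAt.fun_sub ?_ ?_)
  · simpa using ((Real.hasDerivAt_cos x).neg.add_const (1 : ℝ))
  exact HasDerivAt.fun_sum fun j _ => hasDerivAt_powfac (2 * j + 1) _ x

lemma nonneg_of_deriv {f f' : ℝ → ℝ} (hd : ∀ x, HasDerivAt f (f' x) x) (h0 : f 0 = 0)
    (hf : ∀ x, 0 ≤ x → 0 ≤ f' x) (x : ℝ) (hx : 0 ≤ x) : 0 ≤ f x := by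
  have hm : MonotoneOn f (Set.Ici 0) := by
    refine monotoneOn_of_deriv_nonneg (convex_Ici 0)
      (fun y _ => (hd y).continuousAt.continuousWithinAt)
      (fun y _ => (hd y).differentiableAt.differentiableWithinAt) ?_
    intro y hy
    rw [interior_Ici] at hy
    rw [(hd y).deriv]
    exact hf y (le_of_lt hy)
  have := hm (Set.mem_Ici.2 le_rfl) (Set.mem_Ici.2 hx) hx
  rwa [h0] at this

lemma cosRem_nonneg_aux (l : ℕ) : ∀ x : ℝ, 0 ≤ x → 0 ≤ cosRem l x := by
  induction l with
  | zero =>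
    intro x _
    simp [cosRem, Real.cos_le_one]
  | succ l ih =>
    refine nonneg_of_deriv (cosRem_hasDerivAt l) ?_ ?_
    · simp [cosRem, Finset.sum_range_succ']
    · refine nonneg_of_deriv (sinRem_hasDerivAt l) ?_ ih
      simp [sinRem]

lemma cosRem_nonneg (l : ℕ) (x : ℝ) : 0 ≤ cosRem l x := by
  have h := cosRem_nonneg_aux l |x| (abs_nonneg x)
  have e : cosRem l |x| = cosRem l x := by
    simp only [cosRem, Real.cos_abs, pow_mul, sq_abs]
  rwa [e] at h

lemma cosRem_le (l : ℕ) (x : ℝ) : cosRem l x ≤ x ^ (2 * (l + 1)) := by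
  have h := cosRem_nonneg (l + 1) x
  have e : cosRem (l + 1) x = x ^ (2 * (l + 1)) / (2 * (l + 1)).factorial - cosRem l x := by
    unfold cosRem
    rw [Finset.sum_range_succ _ (l + 1), pow_succ (-1 : ℝ) (l + 1)]
    have : (-1 : ℝ) ^ (l + 1) * (-1 : ℝ) ^ (l + 1) = 1 := by
      rw [← mul_pow]; simp
    linear_combination (x ^ (2 * (l + 1)) / (2 * (l + 1)).factorial) * this
  have h2 : x ^ (2 * (l + 1)) / (2 * (l + 1)).factorial ≤ x ^ (2 * (l + 1)) := by
    apply div_le_self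
    · rw [pow_mul]; positivity
    · exact_mod_cast Nat.one_le_iff_ne_zero.2 (Nat.factorial_ne_zero _)
  linarith

/-- the symbol of the generalized Lévy operator is given by a convergent
integral and is nonnegative:
`a(ξ) = (−1)^{l+1} ∫ (cos⟨y,ξ⟩ − Σ_{j=0}^{l} (−1)^j ⟨y,ξ⟩^{2j}/(2j)!) h(y)|y|^{−(2l+1+α)} dy ≥ 0`. -/
theorem levySymbol_nonneg
    (d l : ℕ) (α : ℝ) (hα : α ∈ Set.Ioo (-1 : ℝ) 0)
    (h : EuclideanSpace ℝ (Fin d) → ℝ)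
    (hmeas : Measurable h) (hpos : ∀ y, 0 ≤ h y)
    (M : ℝ) (hbd : ∀ y, h y ≤ M)
    (hsymm : ∀ y, h (-y) = h y)
    (R : ℝ) (hR : 0 < R) (hvan : ∀ y : EuclideanSpace ℝ (Fin d), R < ‖y‖ → h y = 0)
    (ξ : EuclideanSpace ℝ (Fin d)) :
    Integrable (fun y : EuclideanSpace ℝ (Fin d) =>
      (Real.cos (inner ℝ y ξ) - ∑ j ∈ Finset.range (l + 1),
        (-1 : ℝ) ^ j * (inner ℝ y ξ : ℝ) ^ (2 * j) / (2 * j).factorial) *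
        levyWeight l α h y) ∧
    0 ≤ (-1 : ℝ) ^ (l + 1) * ∫ y,
      (Real.cos (inner ℝ y ξ) - ∑ j ∈ Finset.range (l + 1),
        (-1 : ℝ) ^ j * (inner ℝ y ξ : ℝ) ^ (2 * j) / (2 * j).factorial) *
        levyWeight l α h y := by
  obtain ⟨hα1, hα2⟩ := hα
  have hw : ∀ y, 0 ≤ levyWeight l α h y := fun y =>
    mul_nonneg (hpos y) (Real.rpow_nonneg (norm_nonneg y) _)
  have hM : 0 ≤ M := (hpos 0).trans (hbd 0)
  constructor
  · set F := (fun y : EuclideanSpace ℝ (Fin d) =>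
      (Real.cos (inner ℝ y ξ) - ∑ j ∈ Finset.range (l + 1),
        (-1 : ℝ) ^ j * (inner ℝ y ξ : ℝ) ^ (2 * j) / (2 * j).factorial) *
        levyWeight l α h y) with hF
    have hFm : Measurable F := by
      have h1 : Measurable (fun y : EuclideanSpace ℝ (Fin d) =>
          Real.cos (inner ℝ y ξ) - ∑ j ∈ Finset.range (l + 1),
          (-1 : ℝ) ^ j * (inner ℝ y ξ : ℝ) ^ (2 * j) / (2 * j).factorial) := by
        apply Continuous.measurable
        fun_prop
      have h2 : Measurable (levyWeight l α h) :=
        hmeas.mul (measurable_norm.pow_const _)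
      exact h1.mul h2
    have hsub : Function.support F ⊆ Metric.closedBall 0 R := by
      intro y hy
      by_contra hc
      apply hy
      have : R < ‖y‖ := by simpa using hc
      simp [hF, levyWeight, hvan y this]
    rw [← integrableOn_iff_integrable_of_support_subset hsub]
    refine Measure.integrableOn_of_bounded (M := ‖ξ‖ ^ (2 * (l + 1)) * (M * R ^ (1 - α)))
      measure_closedBall_lt_top.ne hFm.aestronglyMeasurable ?_
    refine (ae_restrict_iff' measurableSet_closedBall).2 (Filter.Eventually.of_forall ?_)
    intro y hy
    have hyR : ‖y‖ ≤ R := by simpa using hy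
    have habs : ‖F y‖ = cosRem l (inner ℝ y ξ) * levyWeight l α h y := by
      rw [hF, Real.norm_eq_abs, abs_mul, abs_of_nonneg (hw y),
        ← abs_of_nonneg (cosRem_nonneg l _)]
      simp [cosRem, abs_mul]
    rw [habs]
    have hin : cosRem l (inner ℝ y ξ) ≤ ‖ξ‖ ^ (2 * (l + 1)) * ‖y‖ ^ (2 * (l + 1)) := by
      refine (cosRem_le l _).trans ?_
      rw [← mul_pow]
      have h3 := abs_real_inner_le_norm y ξ
      calc (inner ℝ y ξ : ℝ) ^ (2 * (l + 1)) = |(inner ℝ y ξ : ℝ)| ^ (2 * (l + 1)) := by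
            rw [pow_mul, pow_mul, sq_abs]
        _ ≤ _ := pow_le_pow_left₀ (abs_nonneg _) (by linarith [mul_comm ‖y‖ ‖ξ‖]) _
    have hR' : 0 ≤ R ^ (1 - α) := Real.rpow_nonneg hR.le _
    rcases (norm_nonneg y).eq_or_lt with h0 | h0
    · have : levyWeight l α h y = 0 := by
        unfold levyWeight
        rw [← h0, Real.zero_rpow, mul_zero]
        have : (0 : ℝ) ≤ l := Nat.cast_nonneg l
        linarith
      rw [this, mul_zero]
      positivity
    calc cosRem l (inner ℝ y ξ) * levyWeight l α h y
        ≤ (‖ξ‖ ^ (2 * (l + 1)) * ‖y‖ ^ (2 * (l + 1))) * levyWeight l α h y :=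
          mul_le_mul_of_nonneg_right hin (hw y)
      _ = ‖ξ‖ ^ (2 * (l + 1)) * (h y * ‖y‖ ^ (1 - α)) := by
          have : ‖y‖ ^ (1 - α) = ‖y‖ ^ (2 * (l + 1)) * ‖y‖ ^ (-(2 * (l : ℝ) + 1 + α)) := by
            rw [← Real.rpow_natCast, ← Real.rpow_add h0]
            congr 1
            push_cast
            ring
          rw [this, levyWeight]
          ring
      _ ≤ _ := by
          refine mul_le_mul_of_nonneg_left ?_ (by positivity)
          exact mul_le_mul (hbd y) (Real.rpow_le_rpow h0.le hyR (by linarith))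
            (Real.rpow_nonneg h0.le _) hM
  · rw [← integral_const_mul]
    refine integral_nonneg fun y => ?_
    have := mul_nonneg (cosRem_nonneg l (inner ℝ y ξ)) (hw y)
    unfold cosRem at this
    simpa only [Pi.zero_apply, mul_assoc] using this
end
end
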